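/- arXiv:1701.02168 — 2 statements merged into one kernel-verified Lean document; each statement's English description precedes it below -/
import Mathlib

section
/- Let L be recognized by a Streett automaton with costs A over Σ_I × Σ_O with n states and k Streett pairs, and let f be the constant delay function with f(0) = 2^{n⁴·2^{3k}+1}. Then the following are equivalent: (1) Player I wins Γ_f(L(A)); (2) Player I wins Γ_{f'}(L(A)) for every delay function f'. -/
attribute [local instance] Classical.propDecidable

noncomputable section

/-- A Streett automaton with costs: states `Q`, alphabet `A`, index set `J` of Streett pairs
`(req j, res j)`, and one cost function `Cst j` per pair (`true` = increment). -/
structure StreettCost (Q A J : Type) where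
  qI : Q
  δ : Q → A → Q
  req : J → Set Q
  res : J → Set Q
  Cst : J → Q → A → Bool

namespace StreettCost

variable {Q A J : Type}

/-- The state reached after processing the first `n` letters of `w` starting in `q0`. -/
def stateAt (M : StreettCost Q A J) (q0 : Q) (w : ℕ → A) : ℕ → Q
  | 0 => q0
  | n + 1 => M.δ (stateAt M q0 w n) (w n)

/-- The number of `Cst j`-increment-transitions between positions `m` and `n`. -/
def segCost (M : StreettCost Q A J) (j : J) (q0 : Q) (w : ℕ → A) (m n : ℕ) : ℕ :=
  ((Finset.Ico m n).filter fun i => M.Cst j (stateAt M q0 w i) (w i) = true).card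

/-- The cost-of-response of pair `j` at position `n`. -/
def StCorJ (M : StreettCost Q A J) (j : J) (q0 : Q) (w : ℕ → A) (n : ℕ) : ℕ∞ :=
  if stateAt M q0 w n ∈ M.req j then
    sInf { c : ℕ∞ | ∃ n', n ≤ n' ∧ stateAt M q0 w n' ∈ M.res j ∧
      c = (segCost M j q0 w n n' : ℕ∞) }
  else 0

/-- The aggregated cost-of-response at position `n`. -/
def StCor (M : StreettCost Q A J) (q0 : Q) (w : ℕ → A) (n : ℕ) : ℕ∞ :=
  ⨆ j : J, StCorJ M j q0 w n

/-- The run of `M` on `w` starting in `q0` satisfies the Streett condition with costs. -/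
def Accepting (M : StreettCost Q A J) (q0 : Q) (w : ℕ → A) : Prop :=
  Filter.limsup (fun n => StCor M q0 w n) Filter.atTop < ⊤

/-- The language of `M`. -/
def Lang (M : StreettCost Q A J) : Set (ℕ → A) := { w | Accepting M M.qI w }

end StreettCost

section DelayGames

variable {I O : Type}

/-- The `n`-th letter of the concatenation `u 0 ++ u 1 ++ u 2 ++ ⋯`
(well-defined whenever all blocks are non-empty). -/
def flatWord [Inhabited I] (u : ℕ → List I) (n : ℕ) : I :=
  (((List.range (n + 1)).map u).flatten).getD n default

/-- A delay function maps every round to a positive number of letters. -/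
def DelayFn (f : ℕ → ℕ) : Prop := ∀ i, 0 < f i

/-- The constant delay function `f_k` with `f_k 0 = k + 1` and `f_k i = 1` for `i > 0`. -/
def constDF (k : ℕ) : ℕ → ℕ := fun i => if i = 0 then k + 1 else 1

/-- The sequence of letters Player I has produced up to (and including) round `i`. -/
def oHist (u : ℕ → List I) (i : ℕ) : List I := ((List.range (i + 1)).map u).flatten

/-- `τO` is a winning strategy for Player O in the delay game with delay function `f`
and winning condition `L`. -/
def OWinning [Inhabited I] (f : ℕ → ℕ) (L : Set (ℕ → I × O)) (τO : List I → O) : Prop :=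
  ∀ u : ℕ → List I, ∀ v : ℕ → O,
    (∀ i, (u i).length = f i) →
    (∀ i, v i = τO (oHist u i)) →
    (fun n => (flatWord u n, v n)) ∈ L

/-- Player O wins the delay game `Γ_f(L)`. -/
def OWins [Inhabited I] (f : ℕ → ℕ) (L : Set (ℕ → I × O)) : Prop :=
  ∃ τO : List I → O, OWinning f L τO

/-- `τI` is a winning strategy for Player I in the delay game with delay function `f`
and winning condition `L`. -/
def IWinning [Inhabited I] (f : ℕ → ℕ) (L : Set (ℕ → I × O)) (τI : List O → List I) : Prop :=
  (∀ w, (τI w).length = f w.length) ∧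
  ∀ u : ℕ → List I, ∀ v : ℕ → O,
    (∀ i, u i = τI ((List.range i).map v)) →
    (fun n => (flatWord u n, v n)) ∉ L

/-- Player I wins the delay game `Γ_f(L)`. -/
def IWins [Inhabited I] (f : ℕ → ℕ) (L : Set (ℕ → I × O)) : Prop :=
  ∃ τI : List O → List I, IWinning f L τI

/-- The cost of a strategy `τO` of Player O: the supremum of the word-costs `wc` of the
outcomes of plays consistent with `τO`. -/
def stratCost [Inhabited I] (wc : (ℕ → I × O) → ℕ∞) (f : ℕ → ℕ) (τO : List I → O) : ℕ∞ :=
  ⨆ (u : ℕ → List I) (v : ℕ → O)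
    (_ : (∀ i, (u i).length = f i) ∧ ∀ i, v i = τO (oHist u i)),
    wc (fun n => (flatWord u n, v n))

/-- An optimal winning strategy for Player O in `Γ_f(L)` exists and has cost `c`. -/
def OptimalCostIs [Inhabited I] (L : Set (ℕ → I × O)) (wc : (ℕ → I × O) → ℕ∞)
    (f : ℕ → ℕ) (c : ℕ∞) : Prop :=
  (∃ τO, OWinning f L τO ∧ stratCost wc f τO = c) ∧
  ∀ τO, OWinning f L τO → c ≤ stratCost wc f τO

end DelayGames

/-!
Reading a finite word from a state is summarized by a profile: the state reached and, for each
Streett pair, whether there was a response, whether a request is left pending, and whether there was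
an increment. If two infinite words split into blocks with pairwise equal profiles and the blocks of
one have length at most `d`, then a bound on the cost-of-response of the other yields one for it:
the number of blocks with an increment between a request and its response is the same, and each of
them costs at most `d`.

Call two input words equivalent if the same profiles can be realized by completing them with output
letters. This congruence has at most `d = 2 ^ (n ^ 2 * 2 ^ (3 * k))` classes, so every input word of
length `d` can be pumped to an arbitrarily long equivalent one. Let Player I win with a lookahead of
`2 * d`. For an arbitrary delay function he simulates a play of that game: he replaces each block of
`d` input letters by an equivalent word that is long enough for the delay function at hand, and
lets the simulated opponent answer with output letters that lead to the same profile. The second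
block of lookahead is needed because, at the start of a block, he has to commit to the inputs of the
next one before he sees the outputs for the current one. The simulated play is won by Player I, so
by the transfer of acceptance the real one is won, too.
-/

section InfiniteWords

variable {X Y : Type*}

/-- The factor `w[a, b)` of the infinite word `w`. -/
def factor (w : ℕ → X) (a b : ℕ) : List X := (List.Ico a b).map w

@[simp]
theorem length_factor (w : ℕ → X) (a b : ℕ) : (factor w a b).length = b - a := by
  simp [factor]

theorem factor_append_factor (w : ℕ → X) {a b c : ℕ} (hab : a ≤ b) (hbc : b ≤ c) :
    factor w a b ++ factor w b c = factor w a c := by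
  rw [factor, factor, ← List.map_append, List.Ico.append_consecutive hab hbc, factor]

theorem factor_succ (w : ℕ → X) {a b : ℕ} (hab : a ≤ b) :
    factor w a (b + 1) = factor w a b ++ [w b] := by
  simp [factor, List.Ico.succ_top hab]

theorem factor_eq_factor_iff {w w' : ℕ → X} {a b : ℕ} :
    factor w a b = factor w' a b ↔ Set.EqOn w w' (Set.Ico a b) := by
  simp [factor, Set.EqOn]

theorem factor_zero_eq_iff {w w' : ℕ → X} {n : ℕ} :
    factor w 0 n = factor w' 0 n ↔ Set.EqOn w w' (Set.Iio n) := by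
  rw [factor_eq_factor_iff, ← bot_eq_zero, Set.Ico_bot]

theorem factor_comp (f : X → Y) (w : ℕ → X) (a b : ℕ) :
    factor (f ∘ w) a b = (factor w a b).map f := by
  simp [factor]

theorem exists_mem_Ico_succ {p : ℕ → ℕ} (hp : StrictMono p) (hp0 : p 0 = 0) (n : ℕ) :
    ∃ i, n ∈ Set.Ico (p i) (p (i + 1)) := by
  have h := iUnion_Ico_map_succ_eq_Ici (f := p) (fun i => hp.monotone bot_le)
    hp.not_bddAbove_range_of_wellFoundedLT
  simpa [hp0] using Set.ext_iff.mp h n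

theorem eq_of_factor_eq {w w' : ℕ → X} {p : ℕ → ℕ} (hp : StrictMono p) (hp0 : p 0 = 0)
    (h : ∀ r, factor w (p r) (p (r + 1)) = factor w' (p r) (p (r + 1))) : w = w' := by
  funext n
  obtain ⟨r, hr⟩ := exists_mem_Ico_succ hp hp0 n
  exact factor_eq_factor_iff.mp (h r) hr

/-- Each word of the sequence is a proper prefix of the next one. -/
def Growing (L : ℕ → List X) : Prop := ∀ r, ∃ x, x ≠ [] ∧ L (r + 1) = L r ++ x

theorem Growing.strictMono_length {L : ℕ → List X} (hL : Growing L) :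
    StrictMono fun r => (L r).length := by
  refine strictMono_nat_of_lt_succ fun r => ?_
  obtain ⟨x, hx, hr⟩ := hL r
  simpa [hr] using List.length_pos_iff.mpr hx

theorem Growing.prefix_of_le {L : ℕ → List X} (hL : Growing L) {r s : ℕ} (hrs : r ≤ s) :
    L r <+: L s := by
  refine Nat.rel_of_forall_rel_succ_of_le (· <+: ·) (fun i => ?_) hrs
  obtain ⟨x, -, hi⟩ := hL i
  exact ⟨x, hi.symm⟩

variable [Inhabited X]

/-- The infinite word obtained from a finite word by appending the default letter forever. -/
def extend (l : List X) : ℕ → X := fun n => l.getD n default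

theorem eqOn_extend_of_prefix {l l' : List X} (h : l <+: l') :
    Set.EqOn (extend l) (extend l') (Set.Iio l.length) := by
  obtain ⟨t, rfl⟩ := h
  exact fun n hn => (List.getD_append l t default n hn).symm

theorem factor_extend (l : List X) : factor (extend l) 0 l.length = l := by
  refine List.ext_getElem (by simp) fun n _ hn => ?_
  simp [factor, extend, List.Ico.zero_bot, hn]

theorem eqOn_extend_factor (w : ℕ → X) (n : ℕ) :
    Set.EqOn (extend (factor w 0 n)) w (Set.Iio n) := by
  have h := factor_extend (factor w 0 n)
  rwa [length_factor, Nat.sub_zero, factor_zero_eq_iff] at h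

/-- The infinite word approximated by a growing sequence of finite words. The `(r + 1)`-st word
has more than `r` letters, so it determines letter `r` of the limit. -/
def limitWord (L : ℕ → List X) : ℕ → X := fun n => extend (L (n + 1)) n

theorem Growing.eqOn_limitWord {L : ℕ → List X} (hL : Growing L) (r : ℕ) :
    Set.EqOn (limitWord L) (extend (L r)) (Set.Iio (L r).length) := by
  intro n hn
  rcases le_total (n + 1) r with hnr | hrn
  · exact eqOn_extend_of_prefix (hL.prefix_of_le hnr) hL.strictMono_length.le_apply
  · exact (eqOn_extend_of_prefix (hL.prefix_of_le hrn) hn).symm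

theorem Growing.factor_zero_limitWord {L : ℕ → List X} (hL : Growing L) (r : ℕ) :
    factor (limitWord L) 0 (L r).length = L r := by
  conv_rhs => rw [← factor_extend (L r)]
  exact factor_zero_eq_iff.mpr (hL.eqOn_limitWord r)

theorem Growing.factor_limitWord {L : ℕ → List X} (hL : Growing L) {r : ℕ} {x : List X}
    (hx : L (r + 1) = L r ++ x) :
    factor (limitWord L) (L r).length (L (r + 1)).length = x := by
  have h := factor_append_factor (limitWord L) (Nat.zero_le (L r).length)
    (hL.strictMono_length.monotone r.le_succ)
  rw [hL.factor_zero_limitWord, hL.factor_zero_limitWord] at h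
  exact List.append_cancel_left (h.trans hx)

end InfiniteWords

section Strategies

variable {I O : Type}

/-- The number of letters Player I has picked at the end of round `i`. -/
def lookahead (f : ℕ → ℕ) (i : ℕ) : ℕ := ∑ j ∈ Finset.range (i + 1), f j

theorem monotone_lookahead (f : ℕ → ℕ) : Monotone (lookahead f) := fun _ _ hab =>
  Finset.sum_le_sum_of_subset (Finset.range_mono (Nat.succ_le_succ hab))

theorem DelayFn.le_sum_range {f : ℕ → ℕ} (hf : DelayFn f) (i : ℕ) :
    i ≤ ∑ j ∈ Finset.range i, f j := by
  simpa using Finset.card_nsmul_le_sum (Finset.range i) f 1 fun j _ => hf j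

theorem DelayFn.lt_lookahead {f : ℕ → ℕ} (hf : DelayFn f) (i : ℕ) : i < lookahead f i :=
  hf.le_sum_range (i + 1)

theorem DelayFn.add_le_lookahead {f : ℕ → ℕ} (hf : DelayFn f) (i : ℕ) :
    f 0 + i ≤ lookahead f i := by
  rw [lookahead, Finset.sum_range_succ', add_comm]
  gcongr
  exact DelayFn.le_sum_range (fun j => hf (j + 1)) i

/-- A strategy for Player I viewed as a map from the output word to the input word: the first
`F i` input letters may depend on the first `i` output letters only. -/
def Causal (F : ℕ → ℕ) (α : (ℕ → O) → ℕ → I) : Prop :=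
  ∀ i v v', Set.EqOn v v' (Set.Iio i) → Set.EqOn (α v) (α v') (Set.Iio (F i))

/-- The word produced when Player O plays `v` against `α`. -/
def outcome (α : (ℕ → O) → ℕ → I) (v : ℕ → O) : ℕ → I × O := fun n => (α v n, v n)

theorem growing_flatten [Inhabited I] {u : ℕ → List I} (hu : ∀ i, u i ≠ []) :
    Growing fun n => ((List.range n).map u).flatten := fun r =>
  ⟨u r, hu r, by simp [List.range_succ]⟩

theorem length_flatten_range (u : ℕ → List I) (n : ℕ) :
    (((List.range n).map u).flatten).length = ∑ j ∈ Finset.range n, (u j).length := by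
  induction n with
  | zero => simp
  | succ n ih => rw [List.range_succ, Finset.sum_range_succ, ← ih]; simp

theorem factor_zero_flatWord [Inhabited I] {u : ℕ → List I} (hu : ∀ i, u i ≠ []) (n : ℕ) :
    factor (flatWord u) 0 (∑ j ∈ Finset.range n, (u j).length) =
      ((List.range n).map u).flatten := by
  rw [← length_flatten_range]
  exact (growing_flatten hu).factor_zero_limitWord n

theorem exists_causal_of_iWins [Inhabited I] {f : ℕ → ℕ} (hf : DelayFn f)
    {L : Set (ℕ → I × O)} (h : IWins f L) :
    ∃ α : (ℕ → O) → ℕ → I, Causal (lookahead f) α ∧ ∀ v, outcome α v ∉ L := by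
  obtain ⟨τ, hlen, hτ⟩ := h
  let blocks (v : ℕ → O) (i : ℕ) : List I := τ ((List.range i).map v)
  have length_blocks (v i) : (blocks v i).length = f i := by simp [blocks, hlen]
  have blocks_ne_nil (v i) : blocks v i ≠ [] :=
    List.ne_nil_of_length_pos (length_blocks v i ▸ hf i)
  have factor_eq (v i) : factor (flatWord (blocks v)) 0 (lookahead f i) =
      ((List.range (i + 1)).map (blocks v)).flatten := by
    simpa only [length_blocks, lookahead] using factor_zero_flatWord (blocks_ne_nil v) (i + 1)
  refine ⟨fun v => flatWord (blocks v), fun i v v' hv => ?_, fun v => hτ _ v fun _ => rfl⟩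
  rw [← factor_zero_eq_iff, factor_eq, factor_eq]
  congr 1
  refine List.map_congr_left fun a ha => congrArg τ (List.map_congr_left fun b hb => hv ?_)
  simp only [List.mem_range, Set.mem_Iio] at ha hb ⊢
  lia

theorem iWins_of_causal [Inhabited I] [Inhabited O] {f : ℕ → ℕ} (hf : DelayFn f)
    {L : Set (ℕ → I × O)} {α : (ℕ → O) → ℕ → I} (hα : Causal (lookahead f) α)
    (hL : ∀ v, outcome α v ∉ L) : IWins f L := by
  let start (i : ℕ) : ℕ := ∑ j ∈ Finset.range i, f j
  have start_succ (i) : start (i + 1) = start i + f i := Finset.sum_range_succ f i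
  let τ (y : List O) : List I := factor (α (extend y)) (start y.length) (start (y.length + 1))
  have length_τ (y) : (τ y).length = f y.length := by simp [τ, start_succ]
  refine ⟨τ, length_τ, fun u v hu => ?_⟩
  have u_eq (i) : u i = factor (α v) (start i) (start (i + 1)) := by
    have hv : Set.EqOn (extend ((List.range i).map v)) v (Set.Iio i) := by
      simpa [factor, List.Ico.zero_bot] using eqOn_extend_factor v i
    simp only [hu i, τ, List.length_map, List.length_range, factor_eq_factor_iff]
    exact (hα i _ _ hv).mono fun _ ht => ht.2
  have flatten_eq (n) : ((List.range n).map u).flatten = factor (α v) 0 (start n) := by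
    induction n with
    | zero => rfl
    | succ n ih =>
      rw [← factor_append_factor (α v) (Nat.zero_le (start n)) (by simp [start_succ]), ← ih,
        ← u_eq, List.range_succ]
      simp
  have length_u (i) : (u i).length = f i := by simp [u_eq, start_succ]
  have hu_ne (i) : u i ≠ [] := List.ne_nil_of_length_pos (length_u i ▸ hf i)
  have flatWord_eq : flatWord u = α v := by
    funext m
    have h := factor_zero_flatWord hu_ne (m + 1)
    simp only [length_u, flatten_eq] at h
    exact factor_zero_eq_iff.mp h (hf.lt_lookahead m)
  rw [flatWord_eq]
  exact hL v

theorem iWins_iff_exists_causal [Inhabited I] [Inhabited O] {f : ℕ → ℕ} (hf : DelayFn f)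
    {L : Set (ℕ → I × O)} :
    IWins f L ↔ ∃ α : (ℕ → O) → ℕ → I, Causal (lookahead f) α ∧ ∀ v, outcome α v ∉ L :=
  ⟨exists_causal_of_iWins hf, fun ⟨_, hα, hL⟩ => iWins_of_causal hf hα hL⟩

theorem iWins_of_isEmpty [Inhabited I] [IsEmpty O] (f : ℕ → ℕ) (L : Set (ℕ → I × O)) :
    IWins f L :=
  ⟨fun y => List.replicate (f y.length) default, fun _ => List.length_replicate,
    fun _ v => isEmptyElim (v 0)⟩

end Strategies

section BoundedResponse

open Finset

/-- From position `N` on, every request is answered at the cost of at most `B` increments. -/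
def BoundedResponse (req res inc : ℕ → Prop) (B N : ℕ) : Prop :=
  ∀ m ≥ N, req m → ∃ n ≥ m, res n ∧ #{t ∈ Ico m n | inc t} ≤ B

/-- Some request in `[a, b)` is still unanswered at the end of this interval. -/
def Pending (req res : ℕ → Prop) (a b : ℕ) : Prop :=
  ∃ m ∈ Set.Ico a b, req m ∧ ∀ n ∈ Set.Ico m b, ¬res n

/-- The blocks `[p r, p (r + 1))` with `i < r < l` that contain a position satisfying `P`. -/
def blocksMeeting (P : ℕ → Prop) (p : ℕ → ℕ) (i l : ℕ) : Finset ℕ :=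
  {r ∈ Ioo i l | ∃ t ∈ Set.Ico (p r) (p (r + 1)), P t}

variable {P : ℕ → Prop} {p : ℕ → ℕ} {i l m n d : ℕ}

theorem card_blocksMeeting_le (hp : Monotone p) (hm : m ≤ p (i + 1)) (hn : p l ≤ n) :
    #(blocksMeeting P p i l) ≤ #{t ∈ Ico m n | P t} := by
  refine card_le_card_of_forall_subsingleton (fun r t => t ∈ Set.Ico (p r) (p (r + 1)))
    (fun r hr => ?_) fun t _ r hr s hs => ?_
  · obtain ⟨hr, t, ht, hPt⟩ := mem_filter.mp hr
    have hstart : p (i + 1) ≤ p r := hp (mem_Ioo.mp hr).1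
    have hend : p (r + 1) ≤ p l := hp (mem_Ioo.mp hr).2
    exact ⟨t, mem_filter.mpr ⟨mem_Ico.mpr
      ⟨(hm.trans hstart).trans ht.1, ht.2.trans_le (hend.trans hn)⟩, hPt⟩, ht⟩
  · exact hp.pairwise_disjoint_on_Ico_succ.eq (Set.not_disjoint_iff.mpr ⟨t, hr.2, hs.2⟩)

theorem card_filter_Ico_le_mul (hp : StrictMono p) (hp0 : p 0 = 0)
    (hd : ∀ r, p (r + 1) ≤ p r + d) (hm : p i ≤ m) (hn : n ≤ p (l + 1)) :
    #{t ∈ Ico m n | P t} ≤ (#(blocksMeeting P p i l) + 2) * d := by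
  have cover : {t ∈ Ico m n | P t} ⊆
      (insert i (insert l (blocksMeeting P p i l))).biUnion fun r => Ico (p r) (p (r + 1)) := by
    intro t ht
    obtain ⟨ht, hPt⟩ := mem_filter.mp ht
    obtain ⟨hmt, htn⟩ := mem_Ico.mp ht
    obtain ⟨r, hr⟩ := exists_mem_Ico_succ hp hp0 t
    have hir : i < r + 1 := hp.lt_iff_lt.mp ((hm.trans hmt).trans_lt hr.2)
    have hrl : r < l + 1 := hp.lt_iff_lt.mp (hr.1.trans_lt (htn.trans_le hn))
    refine mem_biUnion.mpr ⟨r, ?_, mem_Ico.mpr hr⟩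
    by_cases hinner : i < r ∧ r < l
    · have hmem : r ∈ blocksMeeting P p i l := mem_filter.mpr ⟨mem_Ioo.mpr hinner, t, hr, hPt⟩
      exact mem_insert_of_mem (mem_insert_of_mem hmem)
    · simp only [mem_insert]
      lia
  calc #{t ∈ Ico m n | P t}
      ≤ #(insert i (insert l (blocksMeeting P p i l))) * d :=
        (card_le_card cover).trans <| card_biUnion_le_card_mul _ _ _ fun r _ => by
          simpa [add_comm] using hd r
    _ ≤ (#(blocksMeeting P p i l) + 2) * d := by
        gcongr
        exact (card_insert_le _ _).trans (Nat.succ_le_succ (card_insert_le _ _))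

variable {req res inc req' res' inc' : ℕ → Prop} {p' : ℕ → ℕ} {B N : ℕ}

theorem exists_mem_Ico_add_one_iff {a b : ℕ} (hab : a ≤ b) :
    (∃ t ∈ Set.Ico a (b + 1), P t) ↔ (∃ t ∈ Set.Ico a b, P t) ∨ P b := by
  rw [← Set.insert_Ico_right_eq_Ico_add_one hab, Set.exists_mem_insert, or_comm]

theorem pending_add_one_iff {a b : ℕ} (hab : a ≤ b) :
    Pending req res a (b + 1) ↔ (Pending req res a b ∨ req b) ∧ ¬res b := by
  have unanswered_iff {m : ℕ} (hm : m ≤ b) :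
      (∀ n ∈ Set.Ico m (b + 1), ¬res n) ↔ (∀ n ∈ Set.Ico m b, ¬res n) ∧ ¬res b := by
    rw [← Set.insert_Ico_right_eq_Ico_add_one hm, Set.forall_mem_insert, and_comm]
  rw [Pending, exists_mem_Ico_add_one_iff hab, unanswered_iff le_rfl, Pending, or_and_right]
  refine or_congr ⟨?_, ?_⟩ (by simp)
  · rintro ⟨m, hm, hreq, hres⟩
    obtain ⟨hbefore, hb⟩ := (unanswered_iff hm.2.le).mp hres
    exact ⟨⟨m, hm, hreq, hbefore⟩, hb⟩
  · rintro ⟨⟨m, hm, hreq, hbefore⟩, hb⟩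
    exact ⟨m, hm, hreq, (unanswered_iff hm.2.le).mpr ⟨hbefore, hb⟩⟩

/-- A request pending at the end of its block `i` corresponds to one pending in the other
sequence. If that one is answered in block `l`, at most `B` blocks strictly between `i` and `l`
contain an increment, so the original request pays at most `d` in each of `B + 2` blocks. -/
theorem BoundedResponse.of_blocks (hp : StrictMono p) (hp0 : p 0 = 0) (hp' : StrictMono p')
    (hp'0 : p' 0 = 0) (hd : ∀ r, p (r + 1) ≤ p r + d)
    (hres : ∀ r, (∃ t ∈ Set.Ico (p' r) (p' (r + 1)), res' t) →
      ∃ t ∈ Set.Ico (p r) (p (r + 1)), res t)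
    (hpending : ∀ r, Pending req res (p r) (p (r + 1)) →
      Pending req' res' (p' r) (p' (r + 1)))
    (hinc : ∀ r, (∃ t ∈ Set.Ico (p r) (p (r + 1)), inc t) →
      ∃ t ∈ Set.Ico (p' r) (p' (r + 1)), inc' t)
    (h : BoundedResponse req' res' inc' B N) :
    BoundedResponse req res inc ((B + 2) * d) (p N) := by
  intro m hNm hm
  obtain ⟨i, hi⟩ := exists_mem_Ico_succ hp hp0 m
  by_cases hanswered : ∃ n ∈ Set.Ico m (p (i + 1)), res n
  · obtain ⟨n, hn, hresn⟩ := hanswered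
    refine ⟨n, hn.1, hresn, (card_filter_Ico_le_mul hp hp0 hd hi.1 hn.2.le).trans ?_⟩
    gcongr
    simp [blocksMeeting]
  · obtain ⟨m', hm', hreq', hunanswered⟩ :=
      hpending i ⟨m, hi, hm, fun n hn hresn => hanswered ⟨n, hn, hresn⟩⟩
    have hNi : N < i + 1 := hp.lt_iff_lt.mp (hNm.trans_lt hi.2)
    have hNm' : N ≤ m' := (Nat.le_of_lt_succ hNi).trans (hp'.le_apply.trans hm'.1)
    obtain ⟨n', hmn', hres', hcost⟩ := h m' hNm' hreq'
    obtain ⟨l, hl⟩ := exists_mem_Ico_succ hp' hp'0 n'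
    have hin' : p' (i + 1) ≤ n' := not_lt.mp fun hlt => hunanswered n' ⟨hmn', hlt⟩ hres'
    have hil : i + 1 < l + 1 := hp'.lt_iff_lt.mp (hin'.trans_lt hl.2)
    obtain ⟨n, hn, hresn⟩ := hres l ⟨n', hl, hres'⟩
    have hmn : m ≤ n := hi.2.le.trans ((hp.monotone (Nat.lt_of_succ_lt_succ hil)).trans hn.1)
    refine ⟨n, hmn, hresn, (card_filter_Ico_le_mul hp hp0 hd hi.1 hn.2.le).trans ?_⟩
    gcongr
    calc #(blocksMeeting inc p i l)
        ≤ #(blocksMeeting inc' p' i l) := by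
          apply card_le_card
          exact monotone_filter_right _ fun r _ => hinc r
      _ ≤ #{t ∈ Ico m' n' | inc' t} := card_blocksMeeting_le hp'.monotone hm'.2.le hl.1
      _ ≤ B := hcost

end BoundedResponse

namespace StreettCost

section Acceptance

variable {Q A J : Type} (M : StreettCost Q A J) (q : Q) (w : ℕ → A) (j : J)

/-- The run of `M` on `w` from `q` visits `req j` at position `t`. -/
def RequestAt (t : ℕ) : Prop := M.stateAt q w t ∈ M.req j

/-- The run of `M` on `w` from `q` visits `res j` at position `t`. -/
def ResponseAt (t : ℕ) : Prop := M.stateAt q w t ∈ M.res j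

/-- The run of `M` on `w` from `q` takes an increment-transition of pair `j` at position `t`. -/
def IncrementAt (t : ℕ) : Prop := M.Cst j (M.stateAt q w t) (w t) = true

theorem segCost_eq_card_incrementAt (m n : ℕ) :
    M.segCost j q w m n = (Finset.filter (M.IncrementAt q w j) (Finset.Ico m n)).card := by
  -- The two filters differ in their decidability instances only.
  unfold segCost IncrementAt
  congr!

variable {M q w}

theorem accepting_iff_boundedResponse : M.Accepting q w ↔
    ∃ B N, ∀ j, BoundedResponse (M.RequestAt q w j) (M.ResponseAt q w j) (M.IncrementAt q w j)
      B N := by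
  constructor
  · intro h
    obtain ⟨b, hb⟩ := ENat.ne_top_iff_exists.mp h.ne
    have hlt : Filter.limsup (M.StCor q w) Filter.atTop < ((b + 1 : ℕ) : ℕ∞) := by
      rw [← hb]
      exact_mod_cast b.lt_succ_self
    obtain ⟨N, hN⟩ := Filter.eventually_atTop.mp (Filter.eventually_lt_of_limsup_lt hlt)
    refine ⟨b + 1, N, fun j m hm hreq => ?_⟩
    have hj : M.StCorJ j q w m < ((b + 1 : ℕ) : ℕ∞) := (le_iSup _ j).trans_lt (hN m hm)
    have hreq' : M.stateAt q w m ∈ M.req j := hreq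
    rw [StCorJ, if_pos hreq', sInf_lt_iff] at hj
    obtain ⟨_, ⟨n, hmn, hres, rfl⟩, hlt⟩ := hj
    rw [Nat.cast_lt, segCost_eq_card_incrementAt] at hlt
    exact ⟨n, hmn, hres, hlt.le⟩
  · rintro ⟨B, N, h⟩
    suffices ∀ m ≥ N, M.StCor q w m ≤ B from
      (Filter.limsup_le_of_le (by isBoundedDefault)
        (Filter.eventually_atTop.mpr ⟨N, this⟩)).trans_lt (ENat.natCast_lt_top B)
    refine fun m hm => iSup_le fun j => ?_
    rw [StCorJ]
    split_ifs with hreq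
    · obtain ⟨n, hmn, hres, hcost⟩ := h j m hm hreq
      rw [← segCost_eq_card_incrementAt] at hcost
      exact sInf_le_of_le ⟨n, hmn, hres, rfl⟩ (Nat.cast_le.mpr hcost)
    · exact zero_le

end Acceptance

section Profiles

variable {Q A J : Type}

/-- The information about a finite run that acceptance depends on: its last state and, among the
positions before the last one, for which pairs there is a response, a request that is not answered,
and an increment-transition. -/
@[ext]
structure Profile (Q J : Type) where
  state : Q
  answered : Set J
  pending : Set J
  costly : Set J

/-- Profiles as tuples. -/
def Profile.equivProd (Q J : Type) : Profile Q J ≃ Q × Set J × Set J × Set J where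
  toFun e := (e.state, e.answered, e.pending, e.costly)
  invFun e := ⟨e.1, e.2.1, e.2.2.1, e.2.2.2⟩

instance [Fintype Q] [Fintype J] : Fintype (Profile Q J) :=
  Fintype.ofEquiv _ (Profile.equivProd Q J).symm

theorem card_set_prod_profile [Fintype Q] [Fintype J] :
    Fintype.card (Set (Q × Profile Q J)) =
      2 ^ (Fintype.card Q ^ 2 * 2 ^ (3 * Fintype.card J)) := by
  rw [Fintype.card_set, Fintype.card_prod, Fintype.card_congr (Profile.equivProd Q J)]
  simp only [Fintype.card_prod, Fintype.card_set]
  ring_nf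

variable (M : StreettCost Q A J)

/-- The profile of a run extended by a transition labelled with `a`. -/
def profileStep (e : Profile Q J) (a : A) : Profile Q J where
  state := M.δ e.state a
  answered := {j | j ∈ e.answered ∨ e.state ∈ M.res j}
  pending := {j | (j ∈ e.pending ∨ e.state ∈ M.req j) ∧ e.state ∉ M.res j}
  costly := {j | j ∈ e.costly ∨ M.Cst j e.state a = true}

/-- The profile of the run of `M` on the finite word `w` from `q`. -/
def profile (q : Q) (w : List A) : Profile Q J := w.foldl M.profileStep ⟨q, ∅, ∅, ∅⟩

theorem profile_append_singleton (q : Q) (w : List A) (a : A) :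
    M.profile q (w ++ [a]) = M.profileStep (M.profile q w) a :=
  List.foldl_concat ..

theorem profile_factor (q : Q) (w : ℕ → A) {s t : ℕ} (hst : s ≤ t) :
    M.profile (M.stateAt q w s) (factor w s t) =
      { state := M.stateAt q w t
        answered := {j | ∃ m ∈ Set.Ico s t, M.ResponseAt q w j m}
        pending := {j | Pending (M.RequestAt q w j) (M.ResponseAt q w j) s t}
        costly := {j | ∃ m ∈ Set.Ico s t, M.IncrementAt q w j m} } := by
  induction t, hst using Nat.le_induction with
  | base => simp [factor, profile, Pending]
  | succ t hst ih =>
    rw [factor_succ w hst, profile_append_singleton, ih]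
    ext j
    · rfl
    · exact (exists_mem_Ico_add_one_iff hst).symm
    · exact (pending_add_one_iff hst).symm
    · exact (exists_mem_Ico_add_one_iff hst).symm

theorem state_profile_factor_zero (q : Q) (w : ℕ → A) (n : ℕ) :
    (M.profile q (factor w 0 n)).state = M.stateAt q w n :=
  congrArg Profile.state (M.profile_factor q w (Nat.zero_le n))

variable {M} {q : Q} {w w' : ℕ → A} {p p' : ℕ → ℕ}

theorem stateAt_eq_of_profile_factor_eq (hp : StrictMono p) (hp0 : p 0 = 0)
    (hp' : StrictMono p') (hp'0 : p' 0 = 0)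
    (h : ∀ r, M.profile (M.stateAt q w (p r)) (factor w (p r) (p (r + 1))) =
      M.profile (M.stateAt q w (p r)) (factor w' (p' r) (p' (r + 1)))) (r : ℕ) :
    M.stateAt q w (p r) = M.stateAt q w' (p' r) := by
  induction r with
  | zero => simp [hp0, hp'0, stateAt]
  | succ r ih =>
    have hr := h r
    nth_rw 2 [ih] at hr
    rw [profile_factor _ _ _ (hp.monotone r.le_succ),
      profile_factor _ _ _ (hp'.monotone r.le_succ)] at hr
    exact congrArg Profile.state hr

theorem Accepting.of_profile_factor_eq {d : ℕ} (hp : StrictMono p) (hp0 : p 0 = 0)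
    (hp' : StrictMono p') (hp'0 : p' 0 = 0) (hd : ∀ r, p (r + 1) ≤ p r + d)
    (h : ∀ r, M.profile (M.stateAt q w (p r)) (factor w (p r) (p (r + 1))) =
      M.profile (M.stateAt q w (p r)) (factor w' (p' r) (p' (r + 1))))
    (hw' : M.Accepting q w') : M.Accepting q w := by
  have profile_eq (r : ℕ) := h r
  simp only [profile_factor _ _ _ (hp.monotone (Nat.le_add_right _ 1))] at profile_eq
  simp only [stateAt_eq_of_profile_factor_eq hp hp0 hp' hp'0 h,
    profile_factor _ _ _ (hp'.monotone (Nat.le_add_right _ 1)), Profile.mk.injEq] at profile_eq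
  obtain ⟨B, N, hB⟩ := accepting_iff_boundedResponse.mp hw'
  refine accepting_iff_boundedResponse.mpr ⟨(B + 2) * d, p N, fun j =>
    (hB j).of_blocks hp hp0 hp' hp'0 hd (fun r => ?_) (fun r => ?_) fun r => ?_⟩
  · exact (Set.ext_iff.mp (profile_eq r).2.1 j).mpr
  · exact (Set.ext_iff.mp (profile_eq r).2.2.1 j).mp
  · exact (Set.ext_iff.mp (profile_eq r).2.2.2 j).mp

end Profiles

end StreettCost

theorem exists_le_length_foldl_eq {σ α : Type*} [Fintype σ] (f : σ → α → σ) (s : σ) {x : List α}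
    (hx : Fintype.card σ ≤ x.length) (N : ℕ) :
    ∃ x' : List α, N ≤ x'.length ∧ x'.foldl f s = x.foldl f s := by
  let D : DFA α σ := ⟨f, s, ∅⟩
  obtain ⟨q, a, b, c, rfl, -, hb, ha, hloop, hc⟩ := D.evalFrom_split hx (rfl : D.evalFrom s x = _)
  have hpow : D.evalFrom q (List.replicate N b).flatten = q :=
    D.evalFrom_of_pow hloop <| Language.mem_kstar.mpr
      ⟨_, rfl, fun _ hy => List.eq_of_mem_replicate hy⟩
  refine ⟨a ++ (List.replicate N b).flatten ++ c, ?_, ?_⟩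
  · have hN : N ≤ N * b.length := Nat.le_mul_of_pos_right N (List.length_pos_iff.mpr hb)
    simp only [List.length_append, List.length_flatten, List.map_replicate, List.sum_replicate,
      smul_eq_mul]
    lia
  · calc D.evalFrom s (a ++ (List.replicate N b).flatten ++ c)
        = D.evalFrom q c := by rw [D.evalFrom_of_append, D.evalFrom_of_append, ha, hpow]
      _ = D.evalFrom s (a ++ b ++ c) := hc

namespace StreettCost

section InputClasses

variable {Q I O J : Type} (M : StreettCost Q (I × O) J)

/-- The pairs of a state and a profile such that the letters of `x` can be completed by output
letters to a word having this profile from this state. It is the behaviour of `x` that matters to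
acceptance, since Player O chooses the output letters. -/
def realizable (x : List I) : Set (Q × Profile Q J) :=
  {z | ∃ w : List (I × O), w.map Prod.fst = x ∧ M.profile z.1 w = z.2}

/-- The effect of appending the input letter `a` on `realizable`. -/
def realizableStep (S : Set (Q × Profile Q J)) (a : I) : Set (Q × Profile Q J) :=
  {z | ∃ e, (z.1, e) ∈ S ∧ ∃ o, M.profileStep e (a, o) = z.2}

variable {M} in
theorem mem_realizable {x : List I} {q : Q} {e : Profile Q J} :
    (q, e) ∈ M.realizable x ↔ ∃ w : List (I × O), w.map Prod.fst = x ∧ M.profile q w = e :=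
  Iff.rfl

variable {M} in
theorem mem_realizableStep {S : Set (Q × Profile Q J)} {a : I} {q : Q} {e : Profile Q J} :
    (q, e) ∈ M.realizableStep S a ↔ ∃ e', (q, e') ∈ S ∧ ∃ o, M.profileStep e' (a, o) = e :=
  Iff.rfl

theorem realizable_append_singleton (x : List I) (a : I) :
    M.realizable (x ++ [a]) = M.realizableStep (M.realizable x) a := by
  ext ⟨q, e⟩
  simp only [mem_realizableStep, mem_realizable]
  constructor
  · rintro ⟨w, hw, rfl⟩
    obtain ⟨w, u, rfl, rfl, hu⟩ := List.map_eq_append_iff.mp hw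
    obtain ⟨⟨a, o⟩, rfl, rfl⟩ := List.map_eq_singleton_iff.mp hu
    exact ⟨M.profile q w, ⟨w, rfl, rfl⟩, o, (M.profile_append_singleton q w _).symm⟩
  · rintro ⟨_, ⟨w, rfl, rfl⟩, o, rfl⟩
    exact ⟨w ++ [(a, o)], by simp, M.profile_append_singleton q w _⟩

theorem realizable_eq_foldl (x : List I) :
    M.realizable x = x.foldl M.realizableStep (M.realizable []) := by
  induction x using List.reverseRecOn with
  | nil => rfl
  | append_singleton x a ih => rw [realizable_append_singleton, ih, List.foldl_concat]

/-- Some input word of length at least `N` that behaves like `x`. It exists if `x` is long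
enough to be pumped. -/
def representative (x : List I) (N : ℕ) : List I :=
  Classical.epsilon fun x' => N ≤ x'.length ∧ M.realizable x' = M.realizable x

theorem representative_spec [Fintype Q] [Fintype J] {x : List I}
    (hx : Fintype.card (Set (Q × Profile Q J)) ≤ x.length) (N : ℕ) :
    N ≤ (M.representative x N).length ∧ M.realizable (M.representative x N) = M.realizable x := by
  refine Classical.epsilon_spec
    (p := fun x' => N ≤ x'.length ∧ M.realizable x' = M.realizable x) ?_
  obtain ⟨x', hN, hx'⟩ := exists_le_length_foldl_eq M.realizableStep (M.realizable []) hx N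
  exact ⟨x', hN, by rw [realizable_eq_foldl, hx', ← realizable_eq_foldl]⟩

/-- Some word with the input letters `x` and the same profile from `q` as `w'`. It exists if `x`
behaves like the input letters of `w'`. -/
def response (q : Q) (x : List I) (w' : List (I × O)) : List (I × O) :=
  Classical.epsilon fun w => w.map Prod.fst = x ∧ M.profile q w = M.profile q w'

theorem response_spec (q : Q) {x : List I} {w' : List (I × O)}
    (hx : M.realizable (w'.map Prod.fst) = M.realizable x) :
    (M.response q x w').map Prod.fst = x ∧ M.profile q (M.response q x w') = M.profile q w' := by
  refine Classical.epsilon_spec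
    (p := fun w => w.map Prod.fst = x ∧ M.profile q w = M.profile q w') ?_
  rw [← mem_realizable, ← hx]
  exact ⟨w', rfl, rfl⟩

end InputClasses

section Simulation

variable {Q I O J : Type}

/-- The plays reached in two delay games that Player I plays in parallel: `real` is the play he has
to win, and `sim` the play in which he follows a given winning strategy. -/
structure Stage (I O : Type) where
  real : List (I × O)
  sim : List (I × O)

/-- The next `d` input letters that the strategy `α` prescribes in the simulated play. -/
def Stage.simInput [Inhabited O] (α : (ℕ → O) → ℕ → I) (d : ℕ) (S : Stage I O) : List I :=
  factor (α (extend (S.sim.map Prod.snd))) S.sim.length (S.sim.length + d)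

variable [Inhabited O] (M : StreettCost Q (I × O) J) (α : (ℕ → O) → ℕ → I) (F : ℕ → ℕ) (d : ℕ)
  (v : ℕ → O) (S : Stage I O)

/-- The next input letters in the real play: they behave like those of the simulated play, and
there are enough of them for the lookahead `F`. -/
def realInput : List I := M.representative (S.simInput α d) (F S.real.length)

/-- The next block of the real play when Player O plays `v`. -/
def realMove : List (I × O) :=
  (M.realInput α F d S).zip
    (factor v S.real.length (S.real.length + (M.realInput α F d S).length))

/-- The next block of the simulated play, where Player O imitates the block `realMove`. -/
def simMove : List (I × O) :=
  M.response (M.profile M.qI S.sim).state (S.simInput α d) (M.realMove α F d v S)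

/-- Both plays extended by one block. -/
def nextStage : Stage I O where
  real := S.real ++ M.realMove α F d v S
  sim := S.sim ++ M.simMove α F d v S

/-- The two plays after `r` blocks when Player O plays `v` in the real one. -/
def stage : ℕ → Stage I O
  | 0 => ⟨[], []⟩
  | r + 1 => M.nextStage α F d v (stage r)

/-- The infinite real play when Player O plays `v`. -/
def realPlay [Inhabited I] : ℕ → I × O := limitWord fun r => (M.stage α F d v r).real

/-- The infinite simulated play when Player O plays `v` in the real one. -/
def simPlay [Inhabited I] : ℕ → I × O := limitWord fun r => (M.stage α F d v r).sim

theorem map_fst_realMove : (M.realMove α F d v S).map Prod.fst = M.realInput α F d S :=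
  List.map_fst_zip (by simp)

theorem map_snd_realMove : (M.realMove α F d v S).map Prod.snd =
    factor v S.real.length (S.real.length + (M.realInput α F d S).length) :=
  List.map_snd_zip (by simp)

theorem length_realMove : (M.realMove α F d v S).length = (M.realInput α F d S).length := by
  rw [← map_fst_realMove, List.length_map]

theorem length_real_nextStage : (M.nextStage α F d v S).real.length =
    S.real.length + (M.realInput α F d S).length := by
  rw [nextStage, List.length_append, length_realMove]

theorem map_fst_real_nextStage : (M.nextStage α F d v S).real.map Prod.fst =
    S.real.map Prod.fst ++ M.realInput α F d S := by
  rw [nextStage, List.map_append, map_fst_realMove]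

variable {M α F d} in
theorem nextStage_eq_of_eqOn {v v' : ℕ → O} {S : Stage I O}
    (h : Set.EqOn v v' (Set.Iio (M.nextStage α F d v S).real.length)) :
    M.nextStage α F d v S = M.nextStage α F d v' S := by
  have realMove_eq : M.realMove α F d v S = M.realMove α F d v' S := by
    rw [realMove, realMove, factor_eq_factor_iff.mpr]
    rw [length_real_nextStage] at h
    exact h.mono fun _ ht => ht.2
  simp only [nextStage, simMove, realMove_eq]

variable {M α F d} in
theorem stage_eq_of_eqOn {v v' : ℕ → O} {r : ℕ}
    (h : Set.EqOn v v' (Set.Iio (M.stage α F d v r).real.length)) :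
    M.stage α F d v r = M.stage α F d v' r := by
  induction r with
  | zero => rfl
  | succ r ih =>
    have length_le : (M.stage α F d v r).real.length ≤ (M.stage α F d v (r + 1)).real.length := by
      rw [stage, length_real_nextStage]
      exact Nat.le_add_right _ _
    rw [stage, stage, nextStage_eq_of_eqOn h, ih (h.mono (Set.Iio_subset_Iio length_le))]

variable [Fintype Q] [Fintype J] (hd : Fintype.card (Set (Q × Profile Q J)) ≤ d)

include hd

theorem realInput_spec : F S.real.length ≤ (M.realInput α F d S).length ∧
    M.realizable (M.realInput α F d S) = M.realizable (S.simInput α d) :=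
  M.representative_spec (by simpa [Stage.simInput] using hd) _

theorem simMove_spec : (M.simMove α F d v S).map Prod.fst = S.simInput α d ∧
    M.profile (M.profile M.qI S.sim).state (M.simMove α F d v S) =
      M.profile (M.profile M.qI S.sim).state (M.realMove α F d v S) :=
  M.response_spec _ <| by rw [map_fst_realMove, (M.realInput_spec α F d S hd).2]

theorem length_simMove : (M.simMove α F d v S).length = d := by
  rw [← List.length_map, (M.simMove_spec α F d v S hd).1, Stage.simInput, length_factor,
    Nat.add_sub_cancel_left]

theorem length_sim_nextStage : (M.nextStage α F d v S).sim.length = S.sim.length + d := by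
  rw [nextStage, List.length_append, length_simMove M α F d v S hd]

theorem growing_real (hF : ∀ i, 0 < F i) : Growing fun r => (M.stage α F d v r).real := fun r => by
  refine ⟨M.realMove α F d v _, List.ne_nil_of_length_pos ?_, rfl⟩
  rw [length_realMove]
  exact (hF _).trans_le (M.realInput_spec α F d _ hd).1

theorem growing_sim : Growing fun r => (M.stage α F d v r).sim := fun r => by
  refine ⟨M.simMove α F d v _, List.ne_nil_of_length_pos ?_, rfl⟩
  rw [length_simMove M α F d v _ hd]
  exact Fintype.card_pos.trans_le hd

variable {M α F d}

theorem snd_comp_realPlay [Inhabited I] (hF : ∀ i, 0 < F i) :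
    Prod.snd ∘ M.realPlay α F d v = v := by
  have growing := M.growing_real α F d v hd hF
  refine eq_of_factor_eq growing.strictMono_length rfl fun r => ?_
  rw [factor_comp, realPlay, growing.factor_limitWord rfl, map_snd_realMove,
    ← length_real_nextStage, stage]

theorem eqOn_simPlay_outputs [Inhabited I] (r : ℕ) :
    Set.EqOn (extend ((M.stage α F d v r).sim.map Prod.snd)) (Prod.snd ∘ M.simPlay α F d v)
      (Set.Iio (M.stage α F d v r).sim.length) := by
  rw [← factor_zero_eq_iff, factor_comp, simPlay,
    (M.growing_sim α F d v hd).factor_zero_limitWord, ← List.length_map Prod.snd, factor_extend]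

theorem simPlay_eq_outcome [Inhabited I] {F₀ : ℕ → ℕ} (hα : Causal F₀ α)
    (hF₀ : ∀ i, i + d ≤ F₀ i) :
    M.simPlay α F d v = outcome α (Prod.snd ∘ M.simPlay α F d v) := by
  have growing := M.growing_sim α F d v hd
  suffices Prod.fst ∘ M.simPlay α F d v = α (Prod.snd ∘ M.simPlay α F d v) from
    funext fun n => Prod.ext (congrFun this n) rfl
  refine eq_of_factor_eq growing.strictMono_length rfl fun r => ?_
  calc factor (Prod.fst ∘ M.simPlay α F d v) (M.stage α F d v r).sim.length
        (M.stage α F d v (r + 1)).sim.length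
      = (M.stage α F d v r).simInput α d := by
        rw [factor_comp, simPlay, growing.factor_limitWord rfl, (M.simMove_spec α F d v _ hd).1]
    _ = factor (α (Prod.snd ∘ M.simPlay α F d v)) (M.stage α F d v r).sim.length
          (M.stage α F d v (r + 1)).sim.length := by
        rw [Stage.simInput, stage, length_sim_nextStage M α F d v _ hd, factor_eq_factor_iff]
        exact (hα _ _ _ (eqOn_simPlay_outputs v hd r)).mono fun _ ht => ht.2.trans_le (hF₀ _)

theorem accepting_simPlay [Inhabited I] (hF : ∀ i, 0 < F i)
    (h : M.Accepting M.qI (M.realPlay α F d v)) : M.Accepting M.qI (M.simPlay α F d v) := by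
  have growing_real := M.growing_real α F d v hd hF
  have growing_sim := M.growing_sim α F d v hd
  refine Accepting.of_profile_factor_eq (d := d) growing_sim.strictMono_length rfl
    growing_real.strictMono_length rfl (fun r => ?_) (fun r => ?_) h
  · exact (M.length_sim_nextStage α F d v _ hd).le
  · rw [← state_profile_factor_zero, simPlay, realPlay, growing_sim.factor_zero_limitWord,
      growing_sim.factor_limitWord rfl, growing_real.factor_limitWord rfl]
    exact (M.simMove_spec α F d v _ hd).2

/-- With a lookahead of two blocks, the outputs in `S` determine the inputs that `α` picks in the
next two blocks of the simulated play, and hence those in the next two blocks of the real one. -/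
theorem map_fst_real_nextStage_nextStage {F₀ : ℕ → ℕ} (hα : Causal F₀ α)
    (hF₀ : ∀ i, i + 2 * d ≤ F₀ i) (v v' : ℕ → O) (S : Stage I O) :
    (M.nextStage α F d v (M.nextStage α F d v S)).real.map Prod.fst =
      (M.nextStage α F d v' (M.nextStage α F d v' S)).real.map Prod.fst := by
  have simInput_eq : (M.nextStage α F d v S).simInput α d =
      (M.nextStage α F d v' S).simInput α d := by
    have past_eq (v) : Set.EqOn (extend (S.sim.map Prod.snd))
        (extend ((M.nextStage α F d v S).sim.map Prod.snd)) (Set.Iio S.sim.length) := by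
      rw [nextStage, ← List.length_map (as := S.sim) Prod.snd]
      exact eqOn_extend_of_prefix
        ((List.prefix_append S.sim (M.simMove α F d v S)).map Prod.snd)
    simp only [Stage.simInput, M.length_sim_nextStage α F d _ S hd, factor_eq_factor_iff]
    refine (hα _ _ _ ((past_eq v).symm.trans (past_eq v'))).mono fun t ht => ?_
    have lookahead_le : S.sim.length + 2 * d ≤ F₀ S.sim.length := hF₀ _
    simp only [Set.mem_Ico, Set.mem_Iio] at ht ⊢
    lia
  have realInput_eq : M.realInput α F d (M.nextStage α F d v S) =
      M.realInput α F d (M.nextStage α F d v' S) := by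
    rw [realInput, realInput, simInput_eq, length_real_nextStage, length_real_nextStage]
  rw [map_fst_real_nextStage, map_fst_real_nextStage, map_fst_real_nextStage,
    map_fst_real_nextStage, realInput_eq]

theorem causal_realPlay [Inhabited I] {F₀ : ℕ → ℕ} (hα : Causal F₀ α)
    (hF₀ : ∀ i, i + 2 * d ≤ F₀ i) (hF : ∀ i, 0 < F i) (hmono : Monotone F) :
    Causal F fun v => Prod.fst ∘ M.realPlay α F d v := by
  intro i v v' hv
  have growing v := M.growing_real α F d v hd hF
  obtain ⟨r, hr⟩ := exists_mem_Ico_succ (growing v).strictMono_length rfl i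
  have stage_eq : M.stage α F d v r = M.stage α F d v' r :=
    stage_eq_of_eqOn (hv.mono (Set.Iio_subset_Iio hr.1))
  have inputs_eq : (M.stage α F d v (r + 2)).real.map Prod.fst =
      (M.stage α F d v' (r + 2)).real.map Prod.fst := by
    simp only [stage, ← stage_eq]
    exact map_fst_real_nextStage_nextStage hd hα hF₀ v v' _
  have factor_eq v : factor (Prod.fst ∘ M.realPlay α F d v) 0
      (M.stage α F d v (r + 2)).real.length = (M.stage α F d v (r + 2)).real.map Prod.fst := by
    rw [factor_comp, realPlay, (growing v).factor_zero_limitWord]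
  have length_eq := congrArg List.length inputs_eq
  rw [List.length_map, List.length_map] at length_eq
  have eqOn := factor_zero_eq_iff.mp <|
    (factor_eq v).trans (inputs_eq.trans (length_eq ▸ factor_eq v').symm)
  refine eqOn.mono (Set.Iio_subset_Iio ?_)
  calc F i ≤ F (M.stage α F d v (r + 1)).real.length := hmono hr.2.le
    _ ≤ (M.realInput α F d (M.stage α F d v (r + 1))).length := (M.realInput_spec α F d _ hd).1
    _ ≤ (M.stage α F d v (r + 2)).real.length :=
      (Nat.le_add_left _ _).trans_eq (M.length_real_nextStage α F d v _).symm

theorem exists_causal_outcome_notMem_lang [Inhabited I] {F₀ : ℕ → ℕ} (hα : Causal F₀ α)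
    (hF₀ : ∀ i, i + 2 * d ≤ F₀ i) (hF : ∀ i, 0 < F i) (hmono : Monotone F)
    (hwin : ∀ v, outcome α v ∉ M.Lang) :
    ∃ β : (ℕ → O) → ℕ → I, Causal F β ∧ ∀ v, outcome β v ∉ M.Lang := by
  refine ⟨_, causal_realPlay (M := M) hd hα hF₀ hF hmono, fun v hv => ?_⟩
  have outcome_eq : outcome (fun v => Prod.fst ∘ M.realPlay α F d v) v = M.realPlay α F d v :=
    funext fun n => Prod.ext rfl (congrFun (snd_comp_realPlay v hd hF) n).symm
  rw [outcome_eq] at hv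
  have sim_accepting := accepting_simPlay v hd hF hv
  rw [simPlay_eq_outcome v hd hα fun i => by linarith [hF₀ i]] at sim_accepting
  exact hwin _ sim_accepting

end Simulation

end StreettCost

theorem statement10_general {Q I O J : Type} [Fintype Q] [Fintype J] [Inhabited I]
    (M : StreettCost Q (I × O) J) {g : ℕ → ℕ} (hg : DelayFn g)
    (hg0 : 2 ^ (Fintype.card Q ^ 2 * 2 ^ (3 * Fintype.card J) + 1) ≤ g 0) :
    IWins g M.Lang ↔ ∀ f : ℕ → ℕ, DelayFn f → IWins f M.Lang := by
  refine ⟨fun hwin f hf => ?_, fun h => h g hg⟩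
  cases isEmpty_or_nonempty O with
  | inl _ => exact iWins_of_isEmpty f M.Lang
  | inr _ =>
    inhabit O
    obtain ⟨α, hα, hL⟩ := (iWins_iff_exists_causal hg).mp hwin
    have lookahead_le (i : ℕ) :
        i + 2 * Fintype.card (Set (Q × StreettCost.Profile Q J)) ≤ lookahead g i := by
      rw [StreettCost.card_set_prod_profile, ← pow_succ']
      linarith [hg.add_le_lookahead i]
    exact (iWins_iff_exists_causal hf).mpr <|
      StreettCost.exists_causal_outcome_notMem_lang le_rfl hα lookahead_le
        (fun i => i.zero_le.trans_lt (hf.lt_lookahead i)) (monotone_lookahead f) hL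

/-- Theorem 5, constant lookahead for Streett conditions with costs.
For a Streett automaton with costs with `n` states and `k` Streett pairs, Player I wins the
delay game with the constant delay function with `f 0 = 2^(n⁴·2^(3k)+1)` iff he wins it for
every delay function. -/
theorem statement10 {Q I O J : Type} [Fintype Q] [Fintype I] [Fintype O] [Fintype J]
    [Inhabited I]
    (M : StreettCost Q (I × O) J) (n k : ℕ)
    (hn : Fintype.card Q = n) (hk : Fintype.card J = k) :
    IWins (fun i => if i = 0 then 2 ^ (n ^ 4 * 2 ^ (3 * k) + 1) else 1) M.Lang ↔
      ∀ f : ℕ → ℕ, DelayFn f → IWins f M.Lang := by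
  subst hn hk
  have card_pos : 1 ≤ Fintype.card Q := Fintype.card_pos_iff.mpr ⟨M.qI⟩
  refine statement10_general M (fun i => by split_ifs <;> positivity) ?_
  rw [if_pos rfl]
  gcongr <;> norm_num
end
end

section
/- There is a constant c > 0 such that for every n > 1 there exists a finitary Büchi automaton A'_n over the alphabet Σ_I × Σ_O with Σ_I = Σ_O = {1, …, n, #} and with at most c·n states such that: (i) Player O wins Γ_f(L(A'_n)) for every delay function f; (ii) an optimal winning strategy for Player O in Γ_{f_{2^n}}(L(A'_n)) has cost 0; and (iii) for every k < 2^n, an optimal winning strategy for Player O in Γ_{f_k}(L(A'_n)) has cost n. -/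
attribute [local instance] Classical.propDecidable

noncomputable section

/-- A parity automaton with costs `(Q, A, qI, δ, Ω, Cst)`.
`Cst q a = true` means that the transition `(q, a, δ q a)` is an increment-transition,
`Cst q a = false` means it is an `ε`-transition. -/
structure PACost (Q : Type) (A : Type) where
  qI : Q
  δ : Q → A → Q
  Ω : Q → ℕ
  Cst : Q → A → Bool

namespace PACost

variable {Q A : Type}

/-- The state reached after processing the first `n` letters of `w` starting in `q0`. -/
def stateAt (M : PACost Q A) (q0 : Q) (w : ℕ → A) : ℕ → Q
  | 0 => q0
  | n + 1 => M.δ (stateAt M q0 w n) (w n)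

/-- The cost (number of increment-transitions) of the run infix between positions `m` and `n`. -/
def segCost (M : PACost Q A) (q0 : Q) (w : ℕ → A) (m n : ℕ) : ℕ :=
  ((Finset.Ico m n).filter fun j => M.Cst (stateAt M q0 w j) (w j) = true).card

/-- `Ans c`: the set of even colors of `M` that are larger than `c`. -/
def Ans (M : PACost Q A) (c : ℕ) : Set ℕ :=
  { c' | (∃ q, M.Ω q = c') ∧ c < c' ∧ Even c' }

/-- The cost-of-response at position `n` of the run of `M` on `w` starting in `q0`. -/
def Cor (M : PACost Q A) (q0 : Q) (w : ℕ → A) (n : ℕ) : ℕ∞ :=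
  if Even (M.Ω (stateAt M q0 w n)) then 0
  else
    sInf { c : ℕ∞ | ∃ n', n < n' ∧
      M.Ω (stateAt M q0 w n') ∈ M.Ans (M.Ω (stateAt M q0 w n)) ∧
      c = (segCost M q0 w n n' : ℕ∞) }

/-- The run of `M` on `w` starting in `q0` satisfies the parity condition with costs. -/
def Accepting (M : PACost Q A) (q0 : Q) (w : ℕ → A) : Prop :=
  Filter.limsup (fun n => Cor M q0 w n) Filter.atTop < ⊤

/-- The language of `M`. -/
def Lang (M : PACost Q A) : Set (ℕ → A) := { w | Accepting M M.qI w }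

/-- `M` is a finitary Büchi automaton: every transition is an increment-transition and
all colors are `1` or `2`. -/
def FinBuchi (M : PACost Q A) : Prop :=
  (∀ q a, M.Cst q a = true) ∧ ∀ q, M.Ω q = 1 ∨ M.Ω q = 2

end PACost

/-- The finite segment `w m, w (m+1), …, w (n-1)` of an infinite word `w`. -/
def seg {A : Type} (w : ℕ → A) (m n : ℕ) : List A :=
  (List.range (n - m)).map fun i => w (m + i)

/-- The cost `limsup_n Cor(ρ(w), n)` of the run of `M` on an infinite word `w`. -/
def PACost.wCost {Q I O : Type} (M : PACost Q (I × O)) : (ℕ → I × O) → ℕ∞ :=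
  fun w => Filter.limsup (fun n => PACost.Cor M M.qI w n) Filter.atTop

/-! The first output letter of Player O decides everything. Answering `#` (the letter `0`) sends
the automaton into a cycle of length `n + 1` with a single accepting state, so the play has cost
exactly `n`. Answering `j ≠ #` is a guess: an accepting sink is reached iff the input contains `#`
or a *bad pair* for `j`, i.e. two occurrences of `j` with no larger letter in between; the play
then has cost `0`, otherwise cost `∞`.

Every word of length `2 ^ n` over `n` ordered letters contains a bad pair (halve it according to
the largest letter), so lookahead `2 ^ n` lets Player O guess correctly. Conversely, the ruler
sequence of 2-adic valuations of `1, …, 2 ^ n - 1` contains none, and if Player I continues it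
forever with a letter different from the guess, none ever appears. -/

section BadPairs

variable {A : Type*} [Preorder A] {α β : ℕ → A} {j : A} {N N' : ℕ}

/-- A *bad pair* of a word: two positions carrying the same letter, with no larger letter strictly
between them. -/
def IsBadPair (α : ℕ → A) (p q : ℕ) : Prop :=
  p < q ∧ α p = α q ∧ ∀ r ∈ Set.Ioo p q, α r ≤ α q

/-- The letter `j` is *pending* after `N` letters if reading `j` next would complete a bad
pair. -/
def IsPending (α : ℕ → A) (j : A) (N : ℕ) : Prop :=
  ∃ p < N, α p = j ∧ ∀ r ∈ Set.Ioo p N, α r ≤ j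

/-- The guess `j` is *settled* within the first `N` letters if these contain the letter `0`
(standing for `#`) or a bad pair carrying the letter `j`. -/
def IsSettled [Zero A] (α : ℕ → A) (j : A) (N : ℕ) : Prop :=
  ∃ q < N, α q = 0 ∨ α q = j ∧ ∃ p, IsBadPair α p q

lemma exists_isBadPair_iff_isPending {q : ℕ} : (∃ p, IsBadPair α p q) ↔ IsPending α (α q) q :=
  Iff.rfl

lemma isPending_succ : IsPending α j (N + 1) ↔ α N = j ∨ α N ≤ j ∧ IsPending α j N := by
  constructor
  · rintro ⟨p, hp, hpj, hle⟩
    rcases Nat.lt_succ_iff_lt_or_eq.mp hp with hpN | rfl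
    · exact .inr ⟨hle N ⟨hpN, N.lt_succ_self⟩, p, hpN, hpj,
        fun r hr => hle r ⟨hr.1, hr.2.trans N.lt_succ_self⟩⟩
    · exact .inl hpj
  · rintro (hN | ⟨hN, p, hp, hpj, hle⟩)
    · exact ⟨N, N.lt_succ_self, hN, fun r hr => absurd hr.2 (by simpa using hr.1)⟩
    · refine ⟨p, hp.trans N.lt_succ_self, hpj, fun r hr => ?_⟩
      rcases Nat.lt_succ_iff_lt_or_eq.mp hr.2 with hrN | rfl
      · exact hle r ⟨hr.1, hrN⟩
      · exact hN

lemma isSettled_succ [Zero A] :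
    IsSettled α j (N + 1) ↔ IsSettled α j N ∨ α N = 0 ∨ α N = j ∧ IsPending α j N := by
  have pending_iff : (α N = j ∧ ∃ p, IsBadPair α p N) ↔ α N = j ∧ IsPending α j N :=
    and_congr_right fun h => h ▸ exists_isBadPair_iff_isPending
  simp only [IsSettled, Nat.lt_succ_iff_lt_or_eq, or_and_right, exists_or, exists_eq_left,
    pending_iff]

lemma IsSettled.mono [Zero A] (h : IsSettled α j N) (hN : N ≤ N') : IsSettled α j N' :=
  let ⟨q, hq, hj⟩ := h
  ⟨q, hq.trans_le hN, hj⟩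

lemma IsSettled.congr [Zero A] (h : IsSettled α j N) (hαβ : ∀ p < N, α p = β p) :
    IsSettled β j N := by
  obtain ⟨q, hq, h0 | ⟨hqj, p, hpq, heq, hle⟩⟩ := h
  · exact ⟨q, hq, .inl (hαβ q hq ▸ h0)⟩
  · refine ⟨q, hq, .inr ⟨hαβ q hq ▸ hqj, p, hpq, ?_, fun r hr => ?_⟩⟩
    · rw [← hαβ p (hpq.trans hq), ← hαβ q hq, heq]
    · rw [← hαβ r (hr.2.trans hq), ← hαβ q hq]
      exact hle r hr

end BadPairs

section LongWords

lemma exists_isBadPair_of_forall_mem {A : Type*} [LinearOrder A] (α : ℕ → A) (S : Finset A)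
    (s : ℕ) (hα : ∀ p ∈ Set.Ico s (s + 2 ^ S.card), α p ∈ S) :
    ∃ p q, s ≤ p ∧ q < s + 2 ^ S.card ∧ IsBadPair α p q := by
  induction S using Finset.induction_on_max generalizing s with
  | empty => simpa using hα s
  | insert a S ha ih =>
    have haS : a ∉ S := fun h => (ha a h).false
    rw [Finset.card_insert_of_notMem haS, pow_succ, mul_two] at hα ⊢
    by_cases hleft : ∃ p ∈ Set.Ico s (s + 2 ^ S.card), α p = a
    · by_cases hright : ∃ q ∈ Set.Ico (s + 2 ^ S.card) (s + 2 ^ S.card + 2 ^ S.card), α q = a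
      · obtain ⟨p, ⟨hsp, hp⟩, hpa⟩ := hleft
        obtain ⟨q, ⟨hsq, hq⟩, hqa⟩ := hright
        refine ⟨p, q, hsp, by lia, by lia, by rw [hpa, hqa], fun r ⟨hpr, hrq⟩ => ?_⟩
        rw [hqa]
        rcases Finset.mem_insert.mp (hα r ⟨by lia, by lia⟩) with h | h
        exacts [h.le, (ha _ h).le]
      · obtain ⟨p, q, hp, hq, hpq⟩ := ih (s + 2 ^ S.card) fun p ⟨hsp, hp⟩ =>
          (Finset.mem_insert.mp (hα p ⟨by lia, by lia⟩)).resolve_left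
            fun h => hright ⟨p, ⟨hsp, by lia⟩, h⟩
        exact ⟨p, q, by lia, by lia, hpq⟩
    · obtain ⟨p, q, hp, hq, hpq⟩ := ih s fun p ⟨hsp, hp⟩ =>
        (Finset.mem_insert.mp (hα p ⟨hsp, by lia⟩)).resolve_left
          fun h => hleft ⟨p, ⟨hsp, hp⟩, h⟩
      exact ⟨p, q, hp, by lia, hpq⟩

lemma exists_ne_zero_isSettled {n : ℕ} (hn : n ≠ 0) (α : ℕ → Fin (n + 1)) :
    ∃ j ≠ 0, IsSettled α j (2 ^ n) := by
  by_cases h : ∃ q < 2 ^ n, α q = 0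
  · obtain ⟨q, hq, h0⟩ := h
    exact ⟨Fin.last n, by simpa [Fin.ext_iff] using hn, q, hq, .inl h0⟩
  · push Not at h
    obtain ⟨p, q, -, hq, hpq⟩ := exists_isBadPair_of_forall_mem α (Finset.univ.erase 0) 0
      (by simpa using h)
    simp only [Finset.mem_univ, Finset.card_erase_of_mem, Finset.card_univ, Fintype.card_fin,
      add_tsub_cancel_right, zero_add] at hq
    exact ⟨α q, h q hq, q, hq, .inr ⟨rfl, p, hpq⟩⟩

end LongWords

section Ruler

variable {n k p q : ℕ} {a j : Fin (n + 1)}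

lemma two_pow_padicValNat_succ_dvd_add (hp : p ≠ 0) :
    2 ^ (padicValNat 2 p + 1) ∣ p + 2 ^ padicValNat 2 p := by
  obtain ⟨m, hm⟩ : 2 ^ padicValNat 2 p ∣ p := pow_padicValNat_dvd
  have hodd : ¬ 2 ∣ m := fun h => pow_succ_padicValNat_not_dvd (p := 2) hp <| by
    conv_rhs => rw [hm]
    exact pow_succ 2 (padicValNat 2 p) ▸ mul_dvd_mul_left _ h
  have hfactor : p + 2 ^ padicValNat 2 p = 2 ^ padicValNat 2 p * (m + 1) := by
    conv_lhs => enter [1]; rw [hm]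
    rw [mul_add_one]
  rw [hfactor, pow_succ]
  exact mul_dvd_mul_left _ (by lia)

lemma exists_padicValNat_two_lt (hp : p ≠ 0) (hpq : p < q)
    (h : padicValNat 2 p = padicValNat 2 q) :
    ∃ r ∈ Set.Ioo p q, padicValNat 2 p < padicValNat 2 r := by
  have hdvd := two_pow_padicValNat_succ_dvd_add hp
  have hle : 2 ^ padicValNat 2 p ≤ q - p := Nat.le_of_dvd (by lia) <|
    Nat.dvd_sub (h ▸ pow_padicValNat_dvd) pow_padicValNat_dvd
  have hne : p + 2 ^ padicValNat 2 p ≠ q := fun heq =>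
    pow_succ_padicValNat_not_dvd (p := 2) (n := q) (by lia) <| by rwa [← h, ← heq]
  have hpos : 0 < 2 ^ padicValNat 2 p := by positivity
  exact ⟨p + 2 ^ padicValNat 2 p, ⟨by lia, by lia⟩,
    (padicValNat_dvd_iff_le (by lia)).mp hdvd⟩

/-- Player I's input word against lookahead `k`: the ruler sequence `v₂(p) + 1` up to position `k`,
continued forever with the letter `a`. The shift by one keeps the sequence away from `0 = #`. -/
def rulerWord (n k : ℕ) (a : Fin (n + 1)) (p : ℕ) : Fin (n + 1) :=
  if p ≤ k then Fin.ofNat (n + 1) (padicValNat 2 p + 1) else a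

lemma val_rulerWord (hk : k < 2 ^ n) (hp : p ≠ 0) (hpk : p ≤ k) :
    (rulerWord n k a p : ℕ) = padicValNat 2 p + 1 := by
  have hlt : padicValNat 2 p < n :=
    (padicValNat_le_nat_log p).trans_lt (Nat.log_lt_of_lt_pow hp (hpk.trans_lt hk))
  rw [rulerWord, if_pos hpk]
  exact Nat.mod_eq_of_lt (by lia)

lemma rulerWord_of_lt (hp : k < p) : rulerWord n k a p = a :=
  if_neg hp.not_ge

lemma not_isSettled_rulerWord (hk : k < 2 ^ n) (ha : a ≠ 0) (haj : a ≠ j) (N : ℕ) :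
    ¬ IsSettled (fun p => rulerWord n k a (p + 1)) j N := by
  rintro ⟨q, -, h⟩
  rcases lt_or_ge k (q + 1) with hq | hq
  · simp only [rulerWord_of_lt hq] at h
    exact h.elim ha fun h => haj h.1
  · have hval : ∀ r ≤ q, (rulerWord n k a (r + 1) : ℕ) = padicValNat 2 (r + 1) + 1 :=
      fun r hr => val_rulerWord hk r.succ_ne_zero (by lia)
    rcases h with h0 | ⟨-, p, hpq, heq, hle⟩
    · simpa [h0] using hval q le_rfl
    · have heq' := congrArg Fin.val heq
      simp only [hval p hpq.le, hval q le_rfl, add_left_inj] at heq'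
      obtain ⟨r, ⟨hpr, hrq⟩, hr⟩ := exists_padicValNat_two_lt p.succ_ne_zero (by lia) heq'
      obtain ⟨r, rfl⟩ := Nat.exists_eq_add_of_le' (Nat.one_le_of_lt hpr)
      have hle' := Fin.le_def.mp (hle r ⟨by lia, by lia⟩)
      simp only [hval r (by lia), hval q le_rfl] at hle'
      lia

end Ruler

section Segments

variable {A : Type} {w w' : ℕ → A} {l m n p : ℕ}

@[simp]
lemma length_seg (w : ℕ → A) (m n : ℕ) : (seg w m n).length = n - m := by
  simp [seg]

lemma getD_seg (hp : p < n - m) (d : A) : (seg w m n).getD p d = w (m + p) := by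
  simp [seg, List.getD, hp]

lemma seg_append (w : ℕ → A) (hlm : l ≤ m) (hmn : m ≤ n) :
    seg w l m ++ seg w m n = seg w l n := by
  have hsplit : n - l = (m - l) + (n - m) := by lia
  rw [seg, seg, seg, hsplit, List.range_add, List.map_append, List.map_map]
  congr 1
  exact List.map_congr_left fun p _ => congrArg w (by simp only; lia)

lemma seg_congr (h : ∀ p ∈ Set.Ico m n, w p = w' p) : seg w m n = seg w' m n :=
  List.map_congr_left fun p hp => h _ ⟨by lia, by have := List.mem_range.mp hp; lia⟩

end Segments

section Outcomes

variable {I O : Type} [Inhabited I] {f : ℕ → ℕ} {τ : List I → O} {w : ℕ → I × O}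

/-- `w` is the outcome of a play of the delay game with delay function `f` in which Player O
follows `τ`. -/
def IsOutcome (f : ℕ → ℕ) (τ : List I → O) (w : ℕ → I × O) : Prop :=
  ∃ (u : ℕ → List I) (v : ℕ → O), ((∀ i, (u i).length = f i) ∧ ∀ i, v i = τ (oHist u i)) ∧
    (fun p => (flatWord u p, v p)) = w

lemma owinning_iff_forall_isOutcome {L : Set (ℕ → I × O)} :
    OWinning f L τ ↔ ∀ w, IsOutcome f τ w → w ∈ L := by
  constructor
  · rintro h _ ⟨u, v, ⟨hu, hv⟩, rfl⟩
    exact h u v hu hv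
  · exact fun h u v hu hv => h _ ⟨u, v, ⟨hu, hv⟩, rfl⟩

lemma stratCost_le_iff {wc : (ℕ → I × O) → ℕ∞} {c : ℕ∞} :
    stratCost wc f τ ≤ c ↔ ∀ w, IsOutcome f τ w → wc w ≤ c := by
  simp only [stratCost, iSup_le_iff]
  constructor
  · rintro h _ ⟨u, v, huv, rfl⟩
    exact h u v huv
  · exact fun h u v huv => h _ ⟨u, v, huv, rfl⟩

lemma IsOutcome.le_stratCost (h : IsOutcome f τ w) (wc : (ℕ → I × O) → ℕ∞) :
    wc w ≤ stratCost wc f τ :=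
  stratCost_le_iff.mp le_rfl w h

lemma flatWord_of_lt_length {u : ℕ → List I} {p : ℕ} (hp : p < (u 0).length) :
    flatWord u p = (u 0)[p] := by
  rw [flatWord, List.range_succ_eq_map, List.map_cons, List.flatten_cons,
    List.getD_append _ _ _ _ hp, List.getD_eq_getElem _ _ hp]

lemma IsOutcome.output_zero (h : IsOutcome f τ w) :
    (w 0).2 = τ (seg (fun p => (w p).1) 0 (f 0)) := by
  obtain ⟨u, v, ⟨hu, hv⟩, rfl⟩ := h
  have hist : oHist u 0 = u 0 := by simp [oHist]
  simp only [hv 0, hist]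
  congr 1
  refine List.ext_getElem (by simp [hu]) fun p hp _ => ?_
  simp [seg, flatWord_of_lt_length hp]

lemma exists_flatWord_eq (hf : DelayFn f) (α : ℕ → I) :
    ∃ u : ℕ → List I, (∀ i, (u i).length = f i) ∧ flatWord u = α := by
  let offset (i : ℕ) : ℕ := ∑ j ∈ Finset.range i, f j
  have offset_succ (i : ℕ) : offset (i + 1) = offset i + f i := Finset.sum_range_succ f i
  let u (i : ℕ) : List I := seg α (offset i) (offset (i + 1))
  have flatten_eq (i : ℕ) : ((List.range i).map u).flatten = seg α 0 (offset i) := by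
    induction i with
    | zero => rfl
    | succ i ih =>
      rw [List.range_succ, List.map_append, List.flatten_append, ih, List.map_singleton,
        List.flatten_singleton]
      exact seg_append α (Nat.zero_le _) (offset_succ i ▸ Nat.le_add_right _ _)
  have lt_offset_succ (i : ℕ) : i < offset (i + 1) := by
    induction i with
    | zero => simpa [offset] using hf 0
    | succ i ih =>
      have := hf (i + 1)
      have := offset_succ (i + 1)
      lia
  refine ⟨u, fun i => by simp [u, offset_succ], funext fun p => ?_⟩
  rw [flatWord, flatten_eq, getD_seg (lt_offset_succ p), zero_add]

lemma exists_isOutcome (hf : DelayFn f) (τ : List I → O) (α : ℕ → I) :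
    ∃ w, IsOutcome f τ w ∧ (fun p => (w p).1) = α := by
  obtain ⟨u, hu, rfl⟩ := exists_flatWord_eq hf α
  exact ⟨_, ⟨u, fun i => τ (oHist u i), ⟨hu, fun _ => rfl⟩, rfl⟩, rfl⟩

end Outcomes

lemma delayFn_constDF (k : ℕ) : DelayFn (constDF k) := fun i => by
  unfold constDF
  split <;> lia

namespace PACost

open Filter

section FinitaryBuchi

variable {Q A I O : Type} {M : PACost Q A} {q₀ : Q}

/-- The run of `M` on `w` from the initial state. -/
def run (M : PACost Q A) (w : ℕ → A) : ℕ → Q := M.stateAt M.qI w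

lemma run_zero (M : PACost Q A) (w : ℕ → A) : M.run w 0 = M.qI := rfl

lemma run_succ (M : PACost Q A) (w : ℕ → A) (p : ℕ) :
    M.run w (p + 1) = M.δ (M.run w p) (w p) := rfl

lemma FinBuchi.segCost_eq (hM : M.FinBuchi) (w : ℕ → A) (p q : ℕ) :
    M.segCost q₀ w p q = q - p := by
  simp [segCost, hM.1]

lemma FinBuchi.mem_ans_one (hM : M.FinBuchi) {q : Q} : M.Ω q ∈ M.Ans 1 ↔ M.Ω q = 2 := by
  rcases hM.2 q with h | h
  · simp [Ans, h]
  · simpa [Ans, h] using ⟨q, h⟩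

lemma FinBuchi.cor_lt_iff (hM : M.FinBuchi) {w : ℕ → A} {p n : ℕ} :
    M.Cor q₀ w p < n ↔ ∃ p' ∈ Set.Ico p (p + n), M.Ω (M.stateAt q₀ w p') = 2 := by
  rcases hM.2 (M.stateAt q₀ w p) with h1 | h2
  · rw [Cor, h1, if_neg (by decide), sInf_lt_iff]
    constructor
    · rintro ⟨_, ⟨p', hp, hans, rfl⟩, hlt⟩
      rw [hM.segCost_eq, Nat.cast_lt] at hlt
      exact ⟨p', ⟨hp.le, by lia⟩, hM.mem_ans_one.mp hans⟩
    · rintro ⟨p', ⟨hp, hlt⟩, h2⟩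
      have hne : p ≠ p' := by rintro rfl; lia
      refine ⟨_, ⟨p', by lia, hM.mem_ans_one.mpr h2, rfl⟩, ?_⟩
      rw [hM.segCost_eq, Nat.cast_lt]
      lia
  · rw [Cor, h2, if_pos even_two, Nat.cast_pos]
    exact ⟨fun hn => ⟨p, by simpa using hn, h2⟩, fun ⟨p', ⟨hp, hlt⟩, _⟩ => by lia⟩

lemma FinBuchi.wCost_le {M : PACost Q (I × O)} (hM : M.FinBuchi) {w : ℕ → I × O} {n : ℕ}
    (h : ∀ᶠ p in atTop, ∃ p' ∈ Set.Icc p (p + n), M.Ω (M.run w p') = 2) : M.wCost w ≤ n := by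
  refine limsup_le_of_le (by isBoundedDefault) (h.mono fun p ⟨p', ⟨hp, hpn⟩, h2⟩ => ?_)
  refine Order.le_of_lt_add_one ?_
  exact_mod_cast hM.cor_lt_iff.mpr ⟨p', ⟨hp, by lia⟩, h2⟩

lemma FinBuchi.le_wCost {M : PACost Q (I × O)} (hM : M.FinBuchi) {w : ℕ → I × O} {n : ℕ}
    (h : ∃ᶠ p in atTop, ∀ p' ∈ Set.Ico p (p + n), M.Ω (M.run w p') ≠ 2) : n ≤ M.wCost w := by
  refine le_limsup_of_frequently_le (h.mono fun p hp => ?_) (by isBoundedDefault)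
  exact not_lt.mp fun hlt => (hM.cor_lt_iff.mp hlt).elim fun p' hp' => hp p' hp'.1 hp'.2

lemma optimalCostIs_lang_wCost [Inhabited I] {M : PACost Q (I × O)} {f : ℕ → ℕ} {n : ℕ}
    {τ : List I → O} (hτ : stratCost M.wCost f τ ≤ n) (h : ∀ σ, n ≤ stratCost M.wCost f σ) :
    OptimalCostIs M.Lang M.wCost f n := by
  have hwin : OWinning f M.Lang τ := owinning_iff_forall_isOutcome.mpr fun w hw =>
    ((hw.le_stratCost M.wCost).trans hτ).trans_lt (ENat.natCast_lt_top n)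
  exact ⟨⟨τ, hwin, hτ.antisymm (h τ)⟩, fun σ _ => h σ⟩

end FinitaryBuchi

section Reindex

variable {Q Q' A I O : Type} (e : Q ≃ Q')

/-- The automaton obtained by renaming the states along `e`. -/
@[simps]
def reindex (M : PACost Q A) : PACost Q' A where
  qI := e M.qI
  δ q a := e (M.δ (e.symm q) a)
  Ω q := M.Ω (e.symm q)
  Cst q a := M.Cst (e.symm q) a

lemma stateAt_reindex (M : PACost Q A) (q₀ : Q) (w : ℕ → A) (p : ℕ) :
    (M.reindex e).stateAt (e q₀) w p = e (M.stateAt q₀ w p) := by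
  induction p with
  | zero => rfl
  | succ p ih => simp [stateAt, ih]

lemma ans_reindex (M : PACost Q A) (c : ℕ) : (M.reindex e).Ans c = M.Ans c := by
  ext c'
  exact and_congr_left fun _ => e.symm.exists_congr_left.trans (by simp)

lemma cor_reindex (M : PACost Q A) (q₀ : Q) (w : ℕ → A) (p : ℕ) :
    (M.reindex e).Cor (e q₀) w p = M.Cor q₀ w p := by
  simp only [Cor, segCost, stateAt_reindex, ans_reindex, reindex_Ω, reindex_Cst,
    e.symm_apply_apply]

lemma lang_reindex (M : PACost Q A) : (M.reindex e).Lang = M.Lang := by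
  ext w
  exact iff_of_eq <| congrArg (limsup · atTop < ⊤) (funext (M.cor_reindex e M.qI w))

lemma wCost_reindex (M : PACost Q (I × O)) : (M.reindex e).wCost = M.wCost :=
  funext fun w => congrArg (limsup · atTop) (funext (M.cor_reindex e M.qI w))

lemma FinBuchi.reindex {M : PACost Q A} (hM : M.FinBuchi) : (M.reindex e).FinBuchi :=
  ⟨fun q a => hM.1 (e.symm q) a, fun q => hM.2 (e.symm q)⟩

end Reindex

end PACost

/-- States of the automaton `A'_n`: `search j seen` looks for a bad pair carrying `j`, where `seen`
records whether `j` is pending; `cycle i` counts modulo `n + 1`. -/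
inductive GuessState (n : ℕ) : Type
  | start
  | search (j : Fin (n + 1)) (seen : Bool)
  | cycle (i : Fin (n + 1))
  | accept

namespace GuessState

/-- The states as a sum type, in order to count them. -/
def equivSum (n : ℕ) :
    GuessState n ≃ (Fin (n + 1) × Bool) ⊕ Fin (n + 1) ⊕ Bool where
  toFun
    | search j seen => .inl (j, seen)
    | cycle i => .inr (.inl i)
    | start => .inr (.inr false)
    | accept => .inr (.inr true)
  invFun
    | .inl (j, seen) => search j seen
    | .inr (.inl i) => cycle i
    | .inr (.inr false) => start
    | .inr (.inr true) => accept
  left_inv := by rintro (_ | _ | _ | _) <;> rfl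
  right_inv := by rintro (_ | _ | _ | _) <;> rfl

instance (n : ℕ) : Finite (GuessState n) := .of_equiv _ (equivSum n).symm

lemma card_eq (n : ℕ) : Nat.card (GuessState n) = 3 * n + 5 := by
  simp only [Nat.card_congr (equivSum n), Nat.card_eq_fintype_card, Fintype.card_sum,
    Fintype.card_prod, Fintype.card_fin, Fintype.card_bool]
  lia

end GuessState

open GuessState

/-- The automaton `A'_n`, with `0` playing the role of `#`. The first output letter selects between
the cycle and the search for a bad pair; the first input letter and all later output letters are
ignored. -/
def guessAutomaton (n : ℕ) : PACost (GuessState n) (Fin (n + 1) × Fin (n + 1)) where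
  qI := start
  δ
    | start, (_, b) => if b = 0 then cycle 0 else search b false
    | search j seen, (a, _) =>
      if a = 0 ∨ a = j ∧ seen then accept
      else search j (a = j ∨ a ≤ j ∧ seen)
    | cycle i, _ => cycle (i + 1)
    | accept, _ => accept
  Ω
    | start => 1
    | search _ _ => 1
    | cycle i => if i = 0 then 2 else 1
    | accept => 2
  Cst _ _ := true

section GuessAutomaton

open Filter

variable {n : ℕ} {w : ℕ → Fin (n + 1) × Fin (n + 1)}

lemma finBuchi_guessAutomaton (n : ℕ) : (guessAutomaton n).FinBuchi := by
  refine ⟨fun _ _ => rfl, ?_⟩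
  rintro (_ | _ | i | _)
  · exact .inl rfl
  · exact .inl rfl
  · exact (ite_eq_or_eq (i = 0) 2 1).symm
  · exact .inr rfl

lemma run_guessAutomaton_of_eq_zero (hw : (w 0).2 = 0) (p : ℕ) :
    (guessAutomaton n).run w (p + 1) = cycle (Fin.ofNat (n + 1) p) := by
  induction p with
  | zero => simp [PACost.run_succ, PACost.run_zero, guessAutomaton, hw]
  | succ p ih =>
    rw [PACost.run_succ, ih]
    exact congrArg cycle (Fin.ext (by simp [Fin.val_add]))

lemma run_guessAutomaton_of_ne_zero (hw : (w 0).2 ≠ 0) (p : ℕ) :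
    (guessAutomaton n).run w (p + 1) =
      if IsSettled (fun r => (w (r + 1)).1) (w 0).2 p then accept
      else search (w 0).2 (IsPending (fun r => (w (r + 1)).1) (w 0).2 p) := by
  induction p with
  | zero =>
    simp [PACost.run_succ, PACost.run_zero, guessAutomaton, hw, IsSettled, IsPending]
  | succ p ih =>
    rw [PACost.run_succ, ih]
    simp only [isSettled_succ, isPending_succ]
    by_cases hs : IsSettled (fun r => (w (r + 1)).1) (w 0).2 p <;> simp [hs, guessAutomaton]

lemma wCost_guessAutomaton_of_eq_zero (hw : (w 0).2 = 0) : (guessAutomaton n).wCost w = n := by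
  have hM := finBuchi_guessAutomaton n
  have Ω_run (p : ℕ) : (guessAutomaton n).Ω ((guessAutomaton n).run w (p + 1)) = 2 ↔
      n + 1 ∣ p := by
    rw [run_guessAutomaton_of_eq_zero hw, Nat.dvd_iff_mod_eq_zero]
    have Ω_cycle (i : Fin (n + 1)) : (guessAutomaton n).Ω (cycle i) = 2 ↔ i = 0 := by
      simp [guessAutomaton]
    rw [Ω_cycle, Fin.ext_iff, Fin.val_ofNat, Fin.val_zero]
  apply le_antisymm
  · refine hM.wCost_le (eventually_atTop.mpr ⟨1, fun p hp => ?_⟩)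
    obtain ⟨p, rfl⟩ := Nat.exists_eq_add_of_le' hp
    have hle := Nat.div_mul_le_self (p + n) (n + 1)
    have hlt := Nat.lt_div_mul_add (a := p + n) n.succ_pos
    exact ⟨(p + n) / (n + 1) * (n + 1) + 1, ⟨by lia, by lia⟩, (Ω_run _).mpr (dvd_mul_left _ _)⟩
  · refine hM.le_wCost (frequently_atTop.mpr fun N => ⟨(n + 1) * N + 2, by nlinarith, ?_⟩)
    rintro p' ⟨hle, hlt⟩ h2
    obtain ⟨p, rfl⟩ := Nat.exists_eq_add_of_le' (Nat.one_le_of_lt hle)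
    exact Nat.not_dvd_of_lt_of_lt_mul_succ (k := N) (by lia) (by lia) ((Ω_run p).mp h2)

lemma wCost_guessAutomaton_of_isSettled (hw : (w 0).2 ≠ 0) {N : ℕ}
    (h : IsSettled (fun p => (w (p + 1)).1) (w 0).2 N) : (guessAutomaton n).wCost w = 0 := by
  refine nonpos_iff_eq_zero.mp ((finBuchi_guessAutomaton n).wCost_le (n := 0) ?_)
  refine eventually_atTop.mpr ⟨N + 1, fun p hp => ⟨p, by simp, ?_⟩⟩
  obtain ⟨p, rfl⟩ := Nat.exists_eq_add_of_le' (Nat.one_le_of_lt hp)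
  rw [run_guessAutomaton_of_ne_zero hw, if_pos (h.mono (by lia))]
  rfl

lemma wCost_guessAutomaton_of_forall_not_isSettled (hw : (w 0).2 ≠ 0)
    (h : ∀ N, ¬ IsSettled (fun p => (w (p + 1)).1) (w 0).2 N) :
    (guessAutomaton n).wCost w = ⊤ := by
  refine ENat.eq_top_iff_forall_ge.mpr fun m => (finBuchi_guessAutomaton n).le_wCost ?_
  refine frequently_atTop.mpr fun N => ⟨N + 1, N.le_succ, fun p ⟨hp, _⟩ => ?_⟩
  obtain ⟨p, rfl⟩ := Nat.exists_eq_add_of_le' (Nat.one_le_of_lt hp)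
  rw [run_guessAutomaton_of_ne_zero hw, if_neg (h p)]
  simp [guessAutomaton]

end GuessAutomaton

section Strategies

variable {n : ℕ}

lemma stratCost_guessAutomaton_const_zero_le (f : ℕ → ℕ) :
    stratCost (guessAutomaton n).wCost f (fun _ => 0) ≤ n :=
  stratCost_le_iff.mpr fun _ hw => (wCost_guessAutomaton_of_eq_zero hw.output_zero).le

lemma owins_guessAutomaton (f : ℕ → ℕ) : OWins f (guessAutomaton n).Lang :=
  ⟨fun _ => 0, owinning_iff_forall_isOutcome.mpr fun _ hw =>
    (wCost_guessAutomaton_of_eq_zero hw.output_zero).trans_lt (ENat.natCast_lt_top n)⟩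

lemma exists_stratCost_guessAutomaton_two_pow_le_zero (hn : n ≠ 0) :
    ∃ τ, stratCost (guessAutomaton n).wCost (constDF (2 ^ n)) τ ≤ 0 := by
  choose τ hτ0 hτ using fun h : List (Fin (n + 1)) =>
    exists_ne_zero_isSettled hn fun p => h.getD (p + 1) 0
  refine ⟨τ, stratCost_le_iff.mpr fun w hw => ?_⟩
  have hw0 := hw.output_zero
  refine (wCost_guessAutomaton_of_isSettled (N := 2 ^ n) (hw0 ▸ hτ0 _) ?_).le
  refine hw0 ▸ (hτ _).congr fun p hp => ?_
  rw [getD_seg (by simpa [constDF] using hp), zero_add]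

lemma le_stratCost_guessAutomaton (hn : 1 < n) {k : ℕ} (hk : k < 2 ^ n)
    (τ : List (Fin (n + 1)) → Fin (n + 1)) :
    n ≤ stratCost (guessAutomaton n).wCost (constDF k) τ := by
  let guess := τ (seg (rulerWord n k 0) 0 (k + 1))
  obtain ⟨a, ha, haj⟩ : ∃ a, a ≠ 0 ∧ a ≠ guess := Fin.exists_ne_and_ne_of_two_lt 0 guess (by lia)
  obtain ⟨w, hw, hwα⟩ := exists_isOutcome (delayFn_constDF k) τ (rulerWord n k a)
  have hguess : (w 0).2 = guess := by
    rw [hw.output_zero, hwα]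
    refine congrArg τ (seg_congr fun p hp => ?_)
    have hpk : p ≤ k := Nat.lt_succ_iff.mp hp.2
    rw [rulerWord, rulerWord, if_pos hpk, if_pos hpk]
  refine le_trans ?_ (hw.le_stratCost _)
  by_cases h0 : (w 0).2 = 0
  · exact (wCost_guessAutomaton_of_eq_zero h0).ge
  · rw [wCost_guessAutomaton_of_forall_not_isSettled h0]
    · exact le_top
    · rw [hguess]
      simpa only [← hwα] using not_isSettled_rulerWord hk ha haj

end Strategies

/-- Theorem 7, exponential lookahead for optimal cost. There is a
linear-size family of finitary Büchi automata `A'_n` over `{1, …, n, #}²` (modeled as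
`Fin (n+1)`) such that Player O wins for every delay function, an optimal winning strategy
with lookahead `2^n` has cost `0`, and for every lookahead `k < 2^n` an optimal winning
strategy has cost `n`. -/
theorem statement13 :
    ∃ c : ℕ, 0 < c ∧ ∀ n : ℕ, 1 < n →
      ∃ m : ℕ, ∃ M : PACost (Fin m) (Fin (n + 1) × Fin (n + 1)),
        m ≤ c * n ∧ M.FinBuchi ∧
        (∀ f : ℕ → ℕ, DelayFn f → OWins f M.Lang) ∧
        OptimalCostIs M.Lang M.wCost (constDF (2 ^ n)) 0 ∧
        (∀ k : ℕ, k < 2 ^ n → OptimalCostIs M.Lang M.wCost (constDF k) (n : ℕ∞)) := by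
  refine ⟨6, by norm_num, fun n hn => ?_⟩
  let e := Finite.equivFin (GuessState n)
  refine ⟨_, (guessAutomaton n).reindex e, ?_, (finBuchi_guessAutomaton n).reindex e, ?_⟩
  · rw [card_eq]
    lia
  rw [PACost.lang_reindex, PACost.wCost_reindex]
  refine ⟨fun f _ => owins_guessAutomaton f, ?_, fun k hk => ?_⟩
  · obtain ⟨τ, hτ⟩ := exists_stratCost_guessAutomaton_two_pow_le_zero (n := n) (by lia)
    exact PACost.optimalCostIs_lang_wCost (n := 0) hτ fun _ => zero_le
  · exact PACost.optimalCostIs_lang_wCost (stratCost_guessAutomaton_const_zero_le _)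
      (le_stratCost_guessAutomaton hn hk)
end
end
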